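/- For every δ > 0 there exist η > 0 and N₀ such that the following holds for all N ≥ N₀. Let S ⊆ Z_N be nonempty and set ν := (N/|S|)·1_S. Suppose that |E[∏_{factors in F} ν(·) | x, x', y, y', z, z' ∈ Z_N] − 1| ≤ η for every nonempty subset F of the twelve factors ν(x), ν(x'), ν(z−x), ν(z−x'), ν(z'−x), ν(z'−x'), ν(y), ν(y'), ν(z−y), ν(z−y'), ν(z'−y), ν(z'−y'). Then every subset A ⊆ S × S containing no corner satisfies |A| ≤ δ|S|². -/

import Mathlib

/-!
A point `(x, y)` of `A` is the crossing of the column `x`, the row `y` and the antidiagonal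
`x + y`. In the tripartite graph whose vertices are the columns and rows of `S × S` and all
antidiagonals, and whose edges are the pairs of lines that cross in a point of `A`, a triangle with
three distinct crossings is a corner. If `A` is corner-free, then every edge lies in exactly one
triangle, so the graph has very few triangles.

If `A` has at least `δ |S|²` points, then the edges between columns and rows form a dense graph,
whereas the edges to the antidiagonals are dense only relative to `ν (z - x)`. Regularising the
dense side alone is enough. Over a uniform pair `U, V` the contribution
`𝔼 z, 𝔼 u ∈ U, 𝔼 v ∈ V, f u v * (w u z * w v z)` of the deviation `f` of the dense edges from their
density is small whenever `0 ≤ w ≤ ν`: two applications of the Cauchy–Schwarz inequality replace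
the unknown weights `w` by `ν`, and the linear forms condition then replaces `ν` by `1`. Hence a
uniform pair of positive density, both of whose parts send many edges to a positive proportion of
the antidiagonals, spans about `|S|⁴ / N` triangles. The diagonal terms of a second moment of `ν`
show that `N² ≤ 2 |S|³`, so for large `N` this exceeds the number `|A|` of triangles.
-/

open Finset

/-- The average (expectation with respect to the uniform measure) of `f` over `α`. -/
noncomputable def avg {α : Type*} [Fintype α] (f : α → ℝ) : ℝ :=
  (∑ x, f x) / (Fintype.card α)

/-- The twelve factors `ν(x), ν(x'), ν(z-x), ν(z-x'), ν(z'-x), ν(z'-x'), ν(y), ν(y'),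
ν(z-y), ν(z-y'), ν(z'-y), ν(z'-y')` appearing in the linear forms condition for corners
in products `S × S`. -/
noncomputable def productCornerFactors {N : ℕ} [NeZero N] (ν : ZMod N → ℝ)
    (x x' y y' z z' : ZMod N) : Fin 12 → ℝ :=
  ![ν x, ν x', ν (z - x), ν (z - x'), ν (z' - x), ν (z' - x'),
    ν y, ν y', ν (z - y), ν (z - y'), ν (z' - y), ν (z' - y')]

open scoped BigOperators

/-! ### Averages over finsets -/

section Averages

variable {ι : Type*}

lemma sq_expect_mul_le (s : Finset ι) {a w : ι → ℝ} (b : ι → ℝ)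
    (ha : ∀ i ∈ s, 0 ≤ a i) (haw : ∀ i ∈ s, a i ≤ w i) :
    (𝔼 i ∈ s, a i * b i) ^ 2 ≤ (𝔼 i ∈ s, w i) * 𝔼 i ∈ s, w i * b i ^ 2 := by
  have hsum : (∑ i ∈ s, a i * b i) ^ 2 ≤ (∑ i ∈ s, w i) * ∑ i ∈ s, w i * b i ^ 2 := by
    refine sum_sq_le_sum_mul_sum_of_sq_le_mul s (fun i hi => (ha i hi).trans (haw i hi))
      (fun i hi => mul_nonneg ((ha i hi).trans (haw i hi)) (sq_nonneg _)) fun i hi => ?_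
    calc (a i * b i) ^ 2 = a i ^ 2 * b i ^ 2 := mul_pow ..
      _ ≤ w i ^ 2 * b i ^ 2 := by have := ha i hi; have := haw i hi; gcongr
      _ = w i * (w i * b i ^ 2) := by ring
  simp only [expect_eq_sum_div_card]
  rw [div_pow, div_mul_div_comm, ← sq]
  gcongr

lemma nonempty_of_mul_card_le [Fintype ι] [Nonempty ι] {s : Finset ι} {ρ : ℝ} (hρ : 0 < ρ)
    (hs : ρ * Fintype.card ι ≤ #s) : s.Nonempty := by
  have hcard : (0 : ℝ) < Fintype.card ι := by exact_mod_cast Fintype.card_pos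
  rw [← card_pos, ← Nat.cast_pos (α := ℝ)]
  exact (mul_pos hρ hcard).trans_le hs

lemma mul_card_prod_le_card_product {κ : Type*} [Fintype ι] [Fintype κ] {s : Finset ι}
    {t : Finset κ} {a b : ℝ} (hb : 0 ≤ b) (hs : a * Fintype.card ι ≤ #s)
    (ht : b * Fintype.card κ ≤ #t) : a * b * Fintype.card (ι × κ) ≤ #(s ×ˢ t) := by
  rw [Fintype.card_prod, card_product]
  push_cast
  calc a * b * (Fintype.card ι * Fintype.card κ)
      = a * Fintype.card ι * (b * Fintype.card κ) := by ring
    _ ≤ #s * #t := by gcongr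

lemma expect_le_inv_mul_expect_univ [Fintype ι] {s : Finset ι} {f : ι → ℝ} {ρ : ℝ}
    (hf : ∀ i, 0 ≤ f i) (hρ : 0 < ρ) (hs : ρ * Fintype.card ι ≤ #s) :
    𝔼 i ∈ s, f i ≤ ρ⁻¹ * 𝔼 i, f i := by
  obtain hι | hι := isEmpty_or_nonempty ι
  · simp [Subsingleton.elim s ∅]
  have : (0 : ℝ) < Fintype.card ι := by exact_mod_cast Fintype.card_pos
  rw [expect_eq_sum_div_card, Fintype.expect_eq_sum_div_card, ← div_eq_inv_mul, div_div,
    mul_comm _ ρ]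
  gcongr
  · exact sum_nonneg fun i _ => hf i
  · exact fun i _ _ => hf i
  · exact subset_univ s

/-- Cauchy–Schwarz applied to `|f ^ 4 - 1| = |f ^ 2 - 1| * (f ^ 2 + 1)`. -/
lemma expect_abs_pow_four_sub_one_le [Fintype ι] [Nonempty ι] {f : ι → ℝ} {η : ℝ} (hη : η ≤ 1)
    (h₂ : |𝔼 i, f i ^ 2 - 1| ≤ η) (h₄ : |𝔼 i, f i ^ 4 - 1| ≤ η) :
    𝔼 i, |f i ^ 4 - 1| ≤ 5 * √η := by
  have hη₀ : 0 ≤ η := (abs_nonneg _).trans h₂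
  obtain ⟨h₂l, h₂u⟩ := abs_le.1 h₂
  have h₄u := (abs_le.1 h₄).2
  have hfactor i : |f i ^ 4 - 1| = |f i ^ 2 - 1| * (f i ^ 2 + 1) := by
    rw [show f i ^ 4 - 1 = (f i ^ 2 - 1) * (f i ^ 2 + 1) by ring, abs_mul,
      abs_of_pos (by positivity : 0 < f i ^ 2 + 1)]
  have hminus : 𝔼 i, |f i ^ 2 - 1| ^ 2 = 𝔼 i, f i ^ 4 - 2 * 𝔼 i, f i ^ 2 + 1 := by
    calc _ = 𝔼 i, (f i ^ 4 - 2 * f i ^ 2 + 1) :=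
          expect_congr rfl fun i _ => by rw [sq_abs]; ring
      _ = _ := by rw [expect_add_distrib, expect_sub_distrib, ← mul_expect, Fintype.expect_const]
  have hplus : 𝔼 i, (f i ^ 2 + 1) ^ 2 = 𝔼 i, f i ^ 4 + 2 * 𝔼 i, f i ^ 2 + 1 := by
    calc _ = 𝔼 i, (f i ^ 4 + 2 * f i ^ 2 + 1) := expect_congr rfl fun i _ => by ring
      _ = _ := by rw [expect_add_distrib, expect_add_distrib, ← mul_expect, Fintype.expect_const]
  refine abs_le_of_sq_le_sq' ?_ (by positivity) |>.2
  calc (𝔼 i, |f i ^ 4 - 1|) ^ 2 = (𝔼 i, |f i ^ 2 - 1| * (f i ^ 2 + 1)) ^ 2 := by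
        simp only [hfactor]
    _ ≤ (𝔼 i, |f i ^ 2 - 1| ^ 2) * 𝔼 i, (f i ^ 2 + 1) ^ 2 := expect_mul_sq_le_sq_mul_sq ..
    _ ≤ (3 * η) * 7 := by
        have hplus₀ : 0 ≤ 𝔼 i, (f i ^ 2 + 1) ^ 2 := expect_nonneg fun _ _ => sq_nonneg _
        gcongr <;> linarith
    _ ≤ (5 * √η) ^ 2 := by rw [mul_pow, Real.sq_sqrt hη₀]; linarith

end Averages

/-! ### Typical kernels -/

section TypicalKernel

variable {α Z : Type*} [Fintype α] [Fintype Z] {ν : α → Z → ℝ} {k : ℕ} {τ : ℝ}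

/-- A nonnegative kernel is `k`-typical up to `τ` if its degrees `𝔼 u, ν u z` and its codegrees
`𝔼 u, ν u z * ν u z'` have `k`-th powers within `τ` of `1` on average. Such a kernel may replace the
constant `1` in averages over dense sets, and typicality of order `2 * k` of `ν` is the same as
typicality of order `k` of `ν ⊗ ν`. -/
structure IsTypicalKernel (k : ℕ) (ν : α → Z → ℝ) (τ : ℝ) : Prop where
  nonneg : ∀ u z, 0 ≤ ν u z
  degree : 𝔼 z, |(𝔼 u, ν u z) ^ k - 1| ≤ τ
  codegree : 𝔼 z, 𝔼 z', |(𝔼 u, ν u z * ν u z') ^ k - 1| ≤ τ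

lemma abs_pow_sub_one_le {x : ℝ} (hx : 0 ≤ x) (k : ℕ) : |x ^ k - 1| ≤ |x ^ (2 * k) - 1| := by
  calc |x ^ k - 1| ≤ |x ^ k - 1| * |x ^ k + 1| := by
        rw [abs_of_nonneg (by positivity : 0 ≤ x ^ k + 1)]
        exact le_mul_of_one_le_right (abs_nonneg _) (by linarith [pow_nonneg hx k])
    _ = |x ^ (2 * k) - 1| := by rw [← abs_mul]; ring_nf

namespace IsTypicalKernel

lemma mono {τ' : ℝ} (h : IsTypicalKernel k ν τ) (hτ : τ ≤ τ') : IsTypicalKernel k ν τ' :=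
  ⟨h.nonneg, h.degree.trans hτ, h.codegree.trans hτ⟩

lemma of_two_mul (h : IsTypicalKernel (2 * k) ν τ) : IsTypicalKernel k ν τ where
  nonneg := h.nonneg
  degree := (expect_le_expect fun _ _ =>
    abs_pow_sub_one_le (expect_nonneg fun _ _ => h.nonneg _ _) k).trans h.degree
  codegree := (expect_le_expect fun _ _ => expect_le_expect fun _ _ =>
    abs_pow_sub_one_le (expect_nonneg fun _ _ => mul_nonneg (h.nonneg _ _) (h.nonneg _ _)) k).trans
      h.codegree

lemma tensor_self (h : IsTypicalKernel (2 * k) ν τ) :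
    IsTypicalKernel k (fun (w : α × α) z => ν w.1 z * ν w.2 z) τ := by
  have expect_tensor (f : α → ℝ) : 𝔼 w : α × α, f w.1 * f w.2 = (𝔼 u, f u) ^ 2 := by
    rw [sq, expect_mul_expect, ← univ_product_univ, expect_product]
  refine ⟨fun w z => mul_nonneg (h.nonneg _ _) (h.nonneg _ _), ?_, ?_⟩
  · have hdeg z := expect_tensor fun u => ν u z
    simpa only [hdeg, ← pow_mul] using h.degree
  · have hcodeg z z' := expect_tensor fun u => ν u z * ν u z'
    simpa only [mul_mul_mul_comm (ν _ _), hcodeg, ← pow_mul] using h.codegree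

/-- Expanding the square produces the codegree minus two degrees. -/
lemma expect_sq_expect_sub_one_le [Nonempty α] [Nonempty Z] (h : IsTypicalKernel 1 ν τ)
    {ρ : ℝ} {Z' : Finset Z} (hρ : 0 < ρ) (hZ' : ρ * Fintype.card Z ≤ #Z') :
    𝔼 u, (𝔼 z ∈ Z', (ν u z - 1)) ^ 2 ≤ 3 * τ / ρ ^ 2 := by
  let p z := 𝔼 u, ν u z
  let q z z' := 𝔼 u, ν u z * ν u z'
  have hdeg : 𝔼 z, |p z - 1| ≤ τ := by simpa only [pow_one] using h.degree
  have hcodeg : 𝔼 z, 𝔼 z', |q z z' - 1| ≤ τ := by simpa only [pow_one] using h.codegree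
  have hexpand z z' : 𝔼 u, (ν u z - 1) * (ν u z' - 1) = (q z z' - 1) - (p z - 1) - (p z' - 1) := by
    calc _ = 𝔼 u, (ν u z * ν u z' - ν u z - ν u z' + 1) := expect_congr rfl fun u _ => by ring
      _ = q z z' - p z - p z' + 1 := by
        simp only [expect_add_distrib, expect_sub_distrib, Fintype.expect_const, p, q]
      _ = _ := by ring
  calc 𝔼 u, (𝔼 z ∈ Z', (ν u z - 1)) ^ 2
      = 𝔼 z ∈ Z', 𝔼 z' ∈ Z', 𝔼 u, (ν u z - 1) * (ν u z' - 1) := by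
        simp only [sq, expect_mul_expect]
        rw [expect_comm]
        exact expect_congr rfl fun z _ => expect_comm ..
    _ ≤ 𝔼 z ∈ Z', 𝔼 z' ∈ Z', (|q z z' - 1| + |p z - 1| + |p z' - 1|) := by
        gcongr with z _ z' _
        rw [hexpand]
        exact (le_abs_self _).trans <| (abs_sub _ _).trans <| by gcongr; exact abs_sub _ _
    _ ≤ ρ⁻¹ * 𝔼 z, ρ⁻¹ * 𝔼 z', (|q z z' - 1| + |p z - 1| + |p z' - 1|) := by
        refine (expect_le_expect fun z _ =>
          expect_le_inv_mul_expect_univ (fun _ => by positivity) hρ hZ').trans ?_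
        exact expect_le_inv_mul_expect_univ
          (fun _ => mul_nonneg (by positivity) (expect_nonneg fun _ _ => by positivity)) hρ hZ'
    _ = (𝔼 z, 𝔼 z', |q z z' - 1| + 𝔼 z, |p z - 1| + 𝔼 z, |p z - 1|) / ρ ^ 2 := by
        simp only [← mul_expect, expect_add_distrib, Fintype.expect_const]
        field_simp
    _ ≤ 3 * τ / ρ ^ 2 := by gcongr; linarith

lemma expect_expect_mul_le [Nonempty α] [Nonempty Z] (h : IsTypicalKernel 1 ν τ) {f : α → ℝ}
    (hf : ∀ u, |f u| ≤ 1) {ε β ρ : ℝ} {B : Finset α} {Z' : Finset Z} (hε : 0 ≤ ε)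
    (hβ : 0 < β) (hB : β * Fintype.card α ≤ #B) (hρ : 0 < ρ) (hZ' : ρ * Fintype.card Z ≤ #Z')
    (hτ : 3 * τ ≤ ε ^ 2 * β * ρ ^ 2) :
    𝔼 z ∈ Z', 𝔼 u ∈ B, ν u z * f u ≤ 𝔼 u ∈ B, f u + ε := by
  have hBne : B.Nonempty := nonempty_of_mul_card_le hβ hB
  have hZ'ne : Z'.Nonempty := nonempty_of_mul_card_le hρ hZ'
  have hsplit : 𝔼 z ∈ Z', 𝔼 u ∈ B, ν u z * f u
      = 𝔼 u ∈ B, f u + 𝔼 u ∈ B, f u * 𝔼 z ∈ Z', (ν u z - 1) := by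
    rw [expect_comm, ← expect_add_distrib]
    refine expect_congr rfl fun u _ => ?_
    rw [expect_sub_distrib, expect_const hZ'ne, ← expect_mul]
    ring
  rw [hsplit]
  gcongr
  refine abs_le_of_sq_le_sq' ?_ hε |>.2
  calc (𝔼 u ∈ B, f u * 𝔼 z ∈ Z', (ν u z - 1)) ^ 2
      ≤ (𝔼 u ∈ B, f u ^ 2) * 𝔼 u ∈ B, (𝔼 z ∈ Z', (ν u z - 1)) ^ 2 :=
        expect_mul_sq_le_sq_mul_sq ..
    _ ≤ 1 * (β⁻¹ * (3 * τ / ρ ^ 2)) := by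
        refine mul_le_mul (expect_le hBne fun u _ => (sq_le_one_iff_abs_le_one _).2 (hf u)) ?_
          (expect_nonneg fun _ _ => sq_nonneg _) zero_le_one
        refine (expect_le_inv_mul_expect_univ (fun _ => sq_nonneg _) hβ hB).trans ?_
        gcongr
        exact h.expect_sq_expect_sub_one_le hρ hZ'
    _ ≤ 1 * (β⁻¹ * (ε ^ 2 * β * ρ ^ 2 / ρ ^ 2)) := by gcongr
    _ = ε ^ 2 := by field_simp

lemma expect_expect_le_two [Nonempty α] [Nonempty Z] (h : IsTypicalKernel 1 ν τ) {β ρ : ℝ}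
    {B : Finset α} {Z' : Finset Z} (hβ : 0 < β) (hB : β * Fintype.card α ≤ #B) (hρ : 0 < ρ)
    (hZ' : ρ * Fintype.card Z ≤ #Z') (hτ : 3 * τ ≤ β * ρ ^ 2) :
    𝔼 z ∈ Z', 𝔼 u ∈ B, ν u z ≤ 2 := by
  have hle := h.expect_expect_mul_le (f := fun _ => 1) (by simp) zero_le_one hβ hB hρ hZ'
    (by simpa using hτ)
  simp only [mul_one, expect_const (nonempty_of_mul_card_le hβ hB)] at hle
  linarith

end IsTypicalKernel

end TypicalKernel

/-! ### Counting triangles over a uniform pair -/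

section TriangleCauchySchwarz

variable {α β Z : Type*} {ν e : α → Z → ℝ} {ν' e' : β → Z → ℝ}

/-- Cauchy–Schwarz in `(z, u)`, which removes `e` and doubles `v`. -/
lemma sq_expect_triangle_le (he : ∀ u z, 0 ≤ e u z) (heν : ∀ u z, e u z ≤ ν u z)
    (F : α → β → ℝ) (U : Finset α) (V : Finset β) (Z' : Finset Z) :
    (𝔼 z ∈ Z', 𝔼 u ∈ U, 𝔼 v ∈ V, F u v * (e u z * e' v z)) ^ 2
      ≤ (𝔼 z ∈ Z', 𝔼 u ∈ U, ν u z) * 𝔼 z ∈ Z', 𝔼 w ∈ V ×ˢ V,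
        e' w.1 z * e' w.2 z * 𝔼 u ∈ U, ν u z * (F u w.1 * F u w.2) := by
  calc (𝔼 z ∈ Z', 𝔼 u ∈ U, 𝔼 v ∈ V, F u v * (e u z * e' v z)) ^ 2
      = (𝔼 p ∈ Z' ×ˢ U, e p.2 p.1 * 𝔼 v ∈ V, F p.2 v * e' v p.1) ^ 2 := by
        rw [expect_product' (f := fun z u => e u z * 𝔼 v ∈ V, F u v * e' v z)]
        simp only [mul_expect, mul_left_comm]
    _ ≤ (𝔼 p ∈ Z' ×ˢ U, ν p.2 p.1) *
          𝔼 p ∈ Z' ×ˢ U, ν p.2 p.1 * (𝔼 v ∈ V, F p.2 v * e' v p.1) ^ 2 :=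
        sq_expect_mul_le _ _ (fun _ _ => he _ _) fun _ _ => heν _ _
    _ = _ := by
        rw [expect_product' (f := fun z u => ν u z),
          expect_product' (f := fun z u => ν u z * (𝔼 v ∈ V, F u v * e' v z) ^ 2)]
        congr 1
        refine expect_congr rfl fun z _ => ?_
        simp only [sq, expect_mul_expect, expect_product]
        simp only [mul_expect]
        rw [expect_comm]
        refine expect_congr rfl fun v _ => ?_
        rw [expect_comm]
        exact expect_congr rfl fun v' _ => expect_congr rfl fun u _ => by ring

/-- The second Cauchy–Schwarz, in `(z, v, v')`, removes `e'` and doubles `u`. -/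
lemma expect_triangle_pow_four_le (he : ∀ u z, 0 ≤ e u z) (heν : ∀ u z, e u z ≤ ν u z)
    (he' : ∀ v z, 0 ≤ e' v z) (heν' : ∀ v z, e' v z ≤ ν' v z)
    (F : α → β → ℝ) (U : Finset α) (V : Finset β) (Z' : Finset Z) :
    (𝔼 z ∈ Z', 𝔼 u ∈ U, 𝔼 v ∈ V, F u v * (e u z * e' v z)) ^ 4
      ≤ (𝔼 z ∈ Z', 𝔼 u ∈ U, ν u z) ^ 2 * ((𝔼 z ∈ Z', 𝔼 w ∈ V ×ˢ V, ν' w.1 z * ν' w.2 z) *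
        𝔼 z ∈ Z', 𝔼 w ∈ V ×ˢ V,
          ν' w.1 z * ν' w.2 z * (𝔼 u ∈ U, ν u z * (F u w.1 * F u w.2)) ^ 2) := by
  have hsecond := sq_expect_mul_le (Z' ×ˢ V ×ˢ V) (a := fun p => e' p.2.1 p.1 * e' p.2.2 p.1)
    (w := fun p => ν' p.2.1 p.1 * ν' p.2.2 p.1)
    (fun p => 𝔼 u ∈ U, ν u p.1 * (F u p.2.1 * F u p.2.2))
    (fun p _ => mul_nonneg (he' _ _) (he' _ _))
    (fun p _ => mul_le_mul (heν' _ _) (heν' _ _) (he' _ _) ((he' _ _).trans (heν' _ _)))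
  simp only [expect_product (s := Z')] at hsecond
  calc _ = ((𝔼 z ∈ Z', 𝔼 u ∈ U, 𝔼 v ∈ V, F u v * (e u z * e' v z)) ^ 2) ^ 2 := by ring
    _ ≤ _ := pow_le_pow_left₀ (sq_nonneg _) (sq_expect_triangle_le he heν F U V Z') 2
    _ ≤ _ := by rw [mul_pow]; gcongr

end TriangleCauchySchwarz

section UniformPair

variable {α : Type*} {G : SimpleGraph α} [DecidableRel G.Adj]

variable (G) in
/-- The balanced function `1_G - d` of the graph `G`. -/
def edgeDev (d : ℝ) (u v : α) : ℝ := (if G.Adj u v then 1 else 0) - d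

lemma abs_edgeDev_le {d : ℝ} (hd₀ : 0 ≤ d) (hd₁ : d ≤ 1) (u v : α) : |edgeDev G d u v| ≤ 1 := by
  unfold edgeDev
  split_ifs <;> rw [abs_le] <;> constructor <;> linarith

lemma sum_adj_eq_edgeDensity_mul (U V : Finset α) :
    ∑ u ∈ U, ∑ v ∈ V, (if G.Adj u v then (1 : ℝ) else 0) = G.edgeDensity U V * (#U * #V) := by
  have hcard : ∑ u ∈ U, ∑ v ∈ V, (if G.Adj u v then (1 : ℝ) else 0) = #(G.interedges U V) := by
    rw [SimpleGraph.interedges, Rel.interedges, ← sum_product', sum_boole]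
  obtain hUV | hUV := eq_or_ne ((#U : ℝ) * #V) 0
  · have hle : (#(G.interedges U V) : ℝ) ≤ #U * #V := by
      exact_mod_cast G.card_interedges_le_mul U V
    rw [hcard, hUV, mul_zero]
    exact le_antisymm (hle.trans hUV.le) (Nat.cast_nonneg _)
  · rw [hcard, ← SimpleGraph.card_interedges_div_card]
    push_cast
    rw [div_mul_cancel₀ _ hUV]

lemma sum_edgeDev_eq (d : ℝ) (U V : Finset α) :
    ∑ u ∈ U, ∑ v ∈ V, edgeDev G d u v = (G.edgeDensity U V - d) * (#U * #V) := by
  simp only [edgeDev, sum_sub_distrib, sum_adj_eq_edgeDensity_mul, sum_const, nsmul_eq_mul]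
  ring

/-- Subsets below the size threshold of `IsUniform` are handled trivially. -/
lemma abs_sum_edgeDev_le {ε : ℝ} {U V U' V' : Finset α} (hε : 0 ≤ ε)
    (hunif : G.IsUniform ε U V) (hU : U' ⊆ U) (hV : V' ⊆ V) :
    |∑ u ∈ U', ∑ v ∈ V', edgeDev G (G.edgeDensity U V) u v| ≤ ε * (#U * #V) := by
  have hcardU : (#U' : ℝ) ≤ #U := by exact_mod_cast card_le_card hU
  have hcardV : (#V' : ℝ) ≤ #V := by exact_mod_cast card_le_card hV
  have d₀ (s t : Finset α) : (0 : ℝ) ≤ G.edgeDensity s t := by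
    exact_mod_cast G.edgeDensity_nonneg s t
  have d₁ (s t : Finset α) : (G.edgeDensity s t : ℝ) ≤ 1 := by
    exact_mod_cast G.edgeDensity_le_one s t
  rw [sum_edgeDev_eq, abs_mul, abs_of_nonneg (by positivity : (0 : ℝ) ≤ #U' * #V')]
  have hdiff : |(G.edgeDensity U' V' : ℝ) - G.edgeDensity U V| ≤ 1 :=
    abs_sub_le_of_nonneg_of_le (d₀ _ _) (d₁ _ _) (d₀ _ _) (d₁ _ _)
  by_cases hUlarge : #U * ε ≤ #U'
  · by_cases hVlarge : #V * ε ≤ #V'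
    · have := (hunif hU hV hUlarge hVlarge).le
      gcongr
    · calc _ ≤ 1 * (#U * (#V * ε)) := by gcongr; exact (not_le.1 hVlarge).le
        _ = _ := by ring
  · calc _ ≤ 1 * ((#U * ε) * #V) := by gcongr; exact (not_le.1 hUlarge).le
      _ = _ := by ring

/-- The weighted sum is a convex combination of the sum over `p` and minus the sum over `¬p`. -/
lemma abs_sum_ite_sub_mul_le {ι : Type*} {s : Finset ι} {f : ι → ℝ} {d K : ℝ} (p : ι → Prop)
    [DecidablePred p] (hd₀ : 0 ≤ d) (hd₁ : d ≤ 1) (hK : ∀ t ⊆ s, |∑ i ∈ t, f i| ≤ K) :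
    |∑ i ∈ s, ((if p i then 1 else 0) - d) * f i| ≤ K := by
  have hsplit : ∑ i ∈ s, ((if p i then 1 else 0) - d) * f i
      = (1 - d) * ∑ i ∈ s with p i, f i - d * ∑ i ∈ s with ¬p i, f i := by
    rw [← sum_filter_add_sum_filter_not s p, mul_sum, mul_sum, sub_eq_add_neg, ← sum_neg_distrib]
    congr 1 <;> refine sum_congr rfl fun i hi => ?_ <;> simp [(mem_filter.1 hi).2]
  obtain ⟨hl, hu⟩ := abs_le.1 (hK _ (filter_subset p s))
  obtain ⟨hl', hu'⟩ := abs_le.1 (hK _ (filter_subset (fun i => ¬p i) s))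
  rw [hsplit, abs_le]
  constructor <;> nlinarith

/-- The product of `F` over the four sides of the box `{u, u'} × {v, v'}`, encoded as
`w = ((v, v'), (u, u'))`; its average is the fourth power of the box norm of `F`. -/
def boxProduct (F : α → α → ℝ) (w : (α × α) × (α × α)) : ℝ :=
  F w.2.1 w.1.1 * F w.2.1 w.1.2 * (F w.2.2 w.1.1 * F w.2.2 w.1.2)

lemma abs_boxProduct_le {F : α → α → ℝ} (hF : ∀ u v, |F u v| ≤ 1) (w : (α × α) × (α × α)) :
    |boxProduct F w| ≤ 1 := by
  simp only [boxProduct, abs_mul]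
  exact mul_le_one₀ (mul_le_one₀ (hF _ _) (abs_nonneg _) (hF _ _)) (by positivity)
    (mul_le_one₀ (hF _ _) (abs_nonneg _) (hF _ _))

lemma expect_boxProduct_eq (F : α → α → ℝ) (U V : Finset α) :
    𝔼 w ∈ (V ×ˢ V) ×ˢ (U ×ˢ U), boxProduct F w
      = 𝔼 v' ∈ V, 𝔼 u' ∈ U, F u' v' * 𝔼 u ∈ U, 𝔼 v ∈ V, F u v' * (F u' v * F u v) := by
  simp only [expect_product, boxProduct, mul_expect]
  rw [expect_comm]
  refine expect_congr rfl fun v' _ => ?_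
  rw [expect_comm]
  refine (expect_congr rfl fun u _ => expect_comm ..).trans ?_
  rw [expect_comm]
  exact expect_congr rfl fun u' _ => expect_congr rfl fun u _ => expect_congr rfl fun v _ => by ring

lemma expect_mul_sq_expect_eq_expect_boxProduct (g : α → ℝ) (F : α → α → ℝ) (U V : Finset α) :
    𝔼 w ∈ V ×ˢ V, g w.1 * g w.2 * (𝔼 u ∈ U, g u * (F u w.1 * F u w.2)) ^ 2
      = 𝔼 w ∈ (V ×ˢ V) ×ˢ (U ×ˢ U), g w.1.1 * g w.1.2 * (g w.2.1 * g w.2.2) * boxProduct F w := by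
  rw [expect_product (s := V ×ˢ V)]
  refine expect_congr rfl fun w _ => ?_
  rw [sq, expect_mul_expect, mul_expect, expect_product]
  refine expect_congr rfl fun u _ => ?_
  rw [mul_expect]
  refine expect_congr rfl fun u' _ => ?_
  rw [boxProduct]
  ring

lemma abs_expect_edgeDev_mul_le {ε : ℝ} {U V : Finset α} (hε : 0 ≤ ε) (hunif : G.IsUniform ε U V)
    {F : α → α → ℝ} (hF : F = edgeDev G (G.edgeDensity U V)) (u' v' : α) :
    |𝔼 u ∈ U, 𝔼 v ∈ V, F u v' * (F u' v * F u v)| ≤ ε := by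
  have hd₀ : (0 : ℝ) ≤ G.edgeDensity U V := by exact_mod_cast G.edgeDensity_nonneg U V
  have hd₁ : (G.edgeDensity U V : ℝ) ≤ 1 := by exact_mod_cast G.edgeDensity_le_one U V
  have hsum : |∑ u ∈ U, F u v' * ∑ v ∈ V, F u' v * F u v| ≤ ε * (#U * #V) := by
    subst hF
    refine abs_sum_ite_sub_mul_le (G.Adj · v') hd₀ hd₁ fun U' hU' => ?_
    rw [sum_comm]
    simp only [← mul_sum]
    refine abs_sum_ite_sub_mul_le (G.Adj u') hd₀ hd₁ fun V' hV' => ?_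
    rw [sum_comm]
    exact abs_sum_edgeDev_le hε hunif hU' hV'
  simp only [← mul_expect]
  simp only [expect_eq_sum_div_card, mul_div_assoc', ← sum_div]
  rw [div_div, abs_div, abs_of_nonneg (by positivity : (0 : ℝ) ≤ #V * #U)]
  exact div_le_of_le_mul₀ (by positivity) hε (by rwa [mul_comm (#V : ℝ)])

lemma expect_boxProduct_edgeDev_le {ε : ℝ} {U V : Finset α} (hε : 0 ≤ ε)
    (hunif : G.IsUniform ε U V) (hU : U.Nonempty) (hV : V.Nonempty) :
    𝔼 w ∈ (V ×ˢ V) ×ˢ (U ×ˢ U), boxProduct (edgeDev G (G.edgeDensity U V)) w ≤ ε := by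
  have hF u v : |edgeDev G (G.edgeDensity U V) u v| ≤ 1 :=
    abs_edgeDev_le (by exact_mod_cast G.edgeDensity_nonneg U V)
      (by exact_mod_cast G.edgeDensity_le_one U V) u v
  rw [expect_boxProduct_eq]
  refine expect_le hV fun v' _ => expect_le hU fun u' _ => (le_abs_self _).trans ?_
  rw [abs_mul]
  exact (mul_le_of_le_one_left (abs_nonneg _) (hF u' v')).trans
    (abs_expect_edgeDev_mul_le hε hunif rfl u' v')

variable {Z : Type*} [Fintype α] [Fintype Z] {ν e : α → Z → ℝ}

namespace IsTypicalKernel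

lemma expect_mul_sq_expect_le [Nonempty α] [Nonempty Z] {τ ε κ ρ : ℝ} (h : IsTypicalKernel 4 ν τ)
    {F : α → α → ℝ} (hF : ∀ u v, |F u v| ≤ 1) (hε : 0 ≤ ε) (hκ : 0 < κ) (hρ : 0 < ρ)
    (hτ : 3 * τ ≤ ε ^ 2 * κ ^ 4 * ρ ^ 2) {U V : Finset α} {Z' : Finset Z}
    (hU : κ * Fintype.card α ≤ #U) (hV : κ * Fintype.card α ≤ #V)
    (hZ' : ρ * Fintype.card Z ≤ #Z') :
    𝔼 z ∈ Z', 𝔼 w ∈ V ×ˢ V, ν w.1 z * ν w.2 z * (𝔼 u ∈ U, ν u z * (F u w.1 * F u w.2)) ^ 2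
      ≤ 𝔼 w ∈ (V ×ˢ V) ×ˢ (U ×ˢ U), boxProduct F w + ε := by
  have htensor : IsTypicalKernel 1
      (fun (w : (α × α) × (α × α)) z => ν w.1.1 z * ν w.1.2 z * (ν w.2.1 z * ν w.2.2 z)) τ :=
    tensor_self (k := 1) (tensor_self (k := 2) h)
  have hVVUU := mul_card_prod_le_card_product (by positivity)
    (mul_card_prod_le_card_product hκ.le hV hV) (mul_card_prod_le_card_product hκ.le hU hU)
  calc _ = 𝔼 z ∈ Z', 𝔼 w ∈ (V ×ˢ V) ×ˢ (U ×ˢ U),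
        ν w.1.1 z * ν w.1.2 z * (ν w.2.1 z * ν w.2.2 z) * boxProduct F w :=
        expect_congr rfl fun z _ =>
          expect_mul_sq_expect_eq_expect_boxProduct (fun u => ν u z) F U V
    _ ≤ _ := htensor.expect_expect_mul_le (abs_boxProduct_le hF) hε (by positivity) hVVUU hρ hZ'
        (hτ.trans_eq (by ring))

lemma expect_edgeDev_triangle_pow_four_le [Nonempty α] [Nonempty Z]
    {τ ε κ ρ : ℝ} (h : IsTypicalKernel 4 ν τ) (he : ∀ u z, 0 ≤ e u z) (heν : ∀ u z, e u z ≤ ν u z)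
    (hε : 0 ≤ ε) (hε₁ : ε ≤ 1) (hκ : 0 < κ) (hκ₁ : κ ≤ 1) (hρ : 0 < ρ)
    (hτ : 3 * τ ≤ ε ^ 2 * κ ^ 4 * ρ ^ 2) {U V : Finset α} {Z' : Finset Z}
    (hU : κ * Fintype.card α ≤ #U) (hV : κ * Fintype.card α ≤ #V)
    (hZ' : ρ * Fintype.card Z ≤ #Z') (hunif : G.IsUniform ε U V) :
    (𝔼 z ∈ Z', 𝔼 u ∈ U, 𝔼 v ∈ V, edgeDev G (G.edgeDensity U V) u v * (e u z * e v z)) ^ 4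
      ≤ 16 * ε := by
  set F := edgeDev G (G.edgeDensity U V)
  have hF u v : |F u v| ≤ 1 :=
    abs_edgeDev_le (by exact_mod_cast G.edgeDensity_nonneg U V)
      (by exact_mod_cast G.edgeDensity_le_one U V) u v
  have h₂ : IsTypicalKernel (2 * 1) ν τ := of_two_mul (k := 2) h
  have hτ' (j : ℕ) (hj : j ≤ 4) : 3 * τ ≤ κ ^ j * ρ ^ 2 := by
    calc 3 * τ ≤ ε ^ 2 * κ ^ 4 * ρ ^ 2 := hτ
      _ ≤ 1 * κ ^ j * ρ ^ 2 := by
        gcongr ?_ * ?_ * _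
        · exact pow_le_one₀ hε hε₁
        · exact pow_le_pow_of_le_one hκ.le hκ₁ hj
      _ = _ := by rw [one_mul]
  have hdeg : 𝔼 z ∈ Z', 𝔼 u ∈ U, ν u z ≤ 2 :=
    h₂.of_two_mul.expect_expect_le_two hκ hU hρ hZ' (by simpa using hτ' 1 (by norm_num))
  have hcodeg : 𝔼 z ∈ Z', 𝔼 w ∈ V ×ˢ V, ν w.1 z * ν w.2 z ≤ 2 :=
    h₂.tensor_self.expect_expect_le_two (by positivity)
      (mul_card_prod_le_card_product hκ.le hV hV) hρ hZ' (by simpa [sq] using hτ' 2 (by norm_num))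
  have hbox := (h.expect_mul_sq_expect_le hF hε hκ hρ hτ hU hV hZ').trans <|
    add_le_add_left (expect_boxProduct_edgeDev_le hε hunif (nonempty_of_mul_card_le hκ hU)
      (nonempty_of_mul_card_le hκ hV)) ε
  have hν := h.nonneg
  calc _ ≤ _ := expect_triangle_pow_four_le he heν he heν F U V Z'
    _ ≤ 2 ^ 2 * (2 * (ε + ε)) := by
        gcongr
        · exact mul_nonneg
            (expect_nonneg fun _ _ => expect_nonneg fun _ _ => mul_nonneg (hν _ _) (hν _ _))
            (expect_nonneg fun _ _ => expect_nonneg fun _ _ =>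
              mul_nonneg (mul_nonneg (hν _ _) (hν _ _)) (sq_nonneg _))
        · exact expect_nonneg fun _ _ => expect_nonneg fun _ _ => hν _ _
        · exact expect_nonneg fun _ _ => expect_nonneg fun _ _ =>
            mul_nonneg (mul_nonneg (hν _ _) (hν _ _)) (sq_nonneg _)
    _ = 16 * ε := by ring

end IsTypicalKernel

end UniformPair

/-! ### Removal relative to a typical kernel -/

section Removal

open scoped Classical

variable {α Z : Type*} {G : SimpleGraph α} {e : α → Z → Prop} {ν : α → Z → ℝ} {c b : ℝ}

/-- Together with the relation `e`, the graph `G` spans a tripartite graph on `α`, `α` and `Z`,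
whose triangles are the triples `u, v, z` with `G.Adj u v`, `e u z` and `e v z`. The triangles are
unique if each edge of `G` and each edge of `e` lies in at most one of them, and each edge of `G`
does lie in one. -/
structure HasUniqueTriangles (G : SimpleGraph α) (e : α → Z → Prop) : Prop where
  existsUnique_apex : ∀ ⦃u v⦄, G.Adj u v → ∃! z, e u z ∧ e v z
  eq_of_apex : ∀ ⦃u v v' z⦄, G.Adj u v → G.Adj u v' → e u z → e v z → e v' z → v = v'

/-- The degree of `z` into `U` along `e`, relative to `#U` and with every edge of `e` given the
weight `c`. -/
noncomputable def relDegree (c : ℝ) (e : α → Z → Prop) (U : Finset α) (z : Z) : ℝ :=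
  𝔼 u ∈ U, if e u z then c else 0

lemma card_mul_relDegree (c : ℝ) (e : α → Z → Prop) (U : Finset α) (z : Z) :
    #U * relDegree c e U z = c * #{u ∈ U | e u z} := by
  rw [relDegree, card_mul_expect, ← sum_filter, sum_const, nsmul_eq_mul, mul_comm]

/-- The edges `uv` of `G` with an apex `z` such that `u` and `z` are related by `R`. -/
noncomputable def edgesWithApex [Fintype α] (G : SimpleGraph α) (e R : α → Z → Prop) :
    Finset (α × α) :=
  {p | G.Adj p.1 p.2 ∧ ∃ z, e p.1 z ∧ e p.2 z ∧ R p.1 z}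

lemma mem_edgesWithApex [Fintype α] {R : α → Z → Prop} {p : α × α} :
    p ∈ edgesWithApex G e R ↔ G.Adj p.1 p.2 ∧ ∃ z, e p.1 z ∧ e p.2 z ∧ R p.1 z := by
  simp [edgesWithApex]

namespace HasUniqueTriangles

lemma card_edgesWithApex_le [Fintype α] [Fintype Z] (hT : HasUniqueTriangles G e)
    (R : α → Z → Prop) : #(edgesWithApex G e R) ≤ ∑ z, #{u | e u z ∧ R u z} := by
  let fiber (z : Z) : Finset (α × α) := {p | G.Adj p.1 p.2 ∧ e p.1 z ∧ e p.2 z ∧ R p.1 z}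
  have hfiber z : #(fiber z) ≤ #{u | e u z ∧ R u z} := by
    refine card_le_card_of_injOn Prod.fst ?_ ?_
    · rintro ⟨u, v⟩ h
      simp only [fiber, coe_filter, mem_univ, true_and, Set.mem_ofPred_eq] at h ⊢
      exact ⟨h.2.1, h.2.2.2⟩
    · rintro ⟨u, v⟩ h ⟨u', v'⟩ h' (rfl : u = u')
      simp only [fiber, coe_filter, mem_univ, true_and, Set.mem_ofPred_eq] at h h'
      rw [hT.eq_of_apex h.1 h'.1 h.2.1 h.2.2.1 h'.2.2.1]
  calc _ ≤ #(univ.biUnion fiber) := card_le_card fun p => by simp [mem_edgesWithApex, fiber]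
    _ ≤ ∑ z, #(fiber z) := card_biUnion_le
    _ ≤ _ := sum_le_sum fun z _ => hfiber z

lemma expect_triangle_le (hT : HasUniqueTriangles G e) (c : ℝ) {U V : Finset α}
    (hU : U.Nonempty) (hV : V.Nonempty) (Z' : Finset Z) :
    𝔼 z ∈ Z', 𝔼 u ∈ U, 𝔼 v ∈ V, (if G.Adj u v then 1 else 0) *
      ((if e u z then c else 0) * (if e v z then c else 0)) ≤ c ^ 2 / #Z' := by
  have hedge u v : ∑ z ∈ Z', (if G.Adj u v then 1 else 0) *
      ((if e u z then c else 0) * (if e v z then c else 0)) ≤ c ^ 2 := by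
    by_cases huv : G.Adj u v
    · obtain ⟨z₀, -, hz₀⟩ := hT.existsUnique_apex huv
      calc _ ≤ ∑ z ∈ Z', if z = z₀ then c ^ 2 else 0 := by
            refine sum_le_sum fun z _ => ?_
            by_cases hz : e u z ∧ e v z
            · rw [if_pos huv, if_pos hz.1, if_pos hz.2, if_pos (hz₀ z hz), one_mul, sq]
            · rw [ite_zero_mul_ite_zero, if_neg hz, mul_zero]
              positivity
        _ ≤ c ^ 2 := by rw [sum_ite_eq']; split_ifs; exacts [le_rfl, sq_nonneg c]
    · simp [huv, sq_nonneg]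
  rw [expect_comm]
  refine expect_le hU fun u _ => ?_
  rw [expect_comm]
  refine expect_le hV fun v _ => ?_
  rw [expect_eq_sum_div_card]
  gcongr
  exact hedge u v

variable [Fintype α] [Fintype Z]

lemma mul_card_le_sq_of_le_relDegree [Nonempty α] [Nonempty Z] (hT : HasUniqueTriangles G e)
    {τ ε κ ρ d₀ : ℝ} (hν : IsTypicalKernel 4 ν τ) (hc : 0 ≤ c) (heν : ∀ u z, e u z → c ≤ ν u z)
    (hε : 0 ≤ ε) (hε₁ : ε ≤ 1) (hκ : 0 < κ) (hκ₁ : κ ≤ 1) (hρ : 0 < ρ)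
    (hτ : 3 * τ ≤ ε ^ 2 * κ ^ 4 * ρ ^ 2) (hd₀ : 0 ≤ d₀) (hb : 0 ≤ b)
    (hεd : 16 * ε ≤ (d₀ * b ^ 2 / 2) ^ 4) {U V : Finset α} {Z' : Finset Z}
    (hU : κ * Fintype.card α ≤ #U) (hV : κ * Fintype.card α ≤ #V)
    (hZ' : ρ * Fintype.card Z ≤ #Z') (hunif : G.IsUniform ε U V) (hd : d₀ ≤ G.edgeDensity U V)
    (hbU : ∀ z ∈ Z', b ≤ relDegree c e U z) (hbV : ∀ z ∈ Z', b ≤ relDegree c e V z) :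
    d₀ * b ^ 2 / 2 * #Z' ≤ c ^ 2 := by
  have hZ'ne : Z'.Nonempty := nonempty_of_mul_card_le hρ hZ'
  have hZ'pos : (0 : ℝ) < #Z' := by exact_mod_cast hZ'ne.card_pos
  set d : ℝ := (G.edgeDensity U V : ℝ)
  let w (u : α) (z : Z) : ℝ := if e u z then c else 0
  let T := 𝔼 z ∈ Z', 𝔼 u ∈ U, 𝔼 v ∈ V, edgeDev G d u v * (w u z * w v z)
  have hT_lower : -(d₀ * b ^ 2 / 2) ≤ T := by
    have hw₀ u z : 0 ≤ w u z := by positivity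
    have hwν u z : w u z ≤ ν u z := by
      simp only [w]; split_ifs with h; exacts [heν u z h, hν.nonneg u z]
    have hpow := (hν.expect_edgeDev_triangle_pow_four_le hw₀ hwν hε hε₁ hκ hκ₁ hρ hτ hU hV hZ'
      hunif).trans hεd
    exact (abs_le.1 <| (pow_le_pow_iff_left₀ (abs_nonneg T) (by positivity) four_ne_zero).1 <| by
      rwa [Even.pow_abs (by decide)]).1
  have hsplit : 𝔼 z ∈ Z', 𝔼 u ∈ U, 𝔼 v ∈ V, (if G.Adj u v then 1 else 0) * (w u z * w v z)
      = d * 𝔼 z ∈ Z', relDegree c e U z * relDegree c e V z + T := by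
    simp only [T, relDegree, expect_mul_expect]
    simp only [mul_expect, ← expect_add_distrib]
    refine expect_congr rfl fun z _ => expect_congr rfl fun u _ => expect_congr rfl fun v _ => ?_
    rw [edgeDev]
    ring
  have hmain : d₀ * b ^ 2 ≤ d * 𝔼 z ∈ Z', relDegree c e U z * relDegree c e V z := by
    have hexp : b ^ 2 ≤ 𝔼 z ∈ Z', relDegree c e U z * relDegree c e V z :=
      le_expect hZ'ne fun z hz => by
        rw [sq]
        exact mul_le_mul (hbU z hz) (hbV z hz) hb (hb.trans (hbU z hz))
    gcongr
    exact hd₀.trans hd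
  have hupper := hT.expect_triangle_le c (nonempty_of_mul_card_le hκ hU)
    (nonempty_of_mul_card_le hκ hV) Z'
  rw [← le_div_iff₀ hZ'pos]
  linarith

end HasUniqueTriangles

/-! ### Light, heavy and unreduced edges -/

variable [Fintype α]

/-- The edges `uv` of `G` whose apex `z` has relative degree less than `b` into the part of `u`. -/
noncomputable def lightEdges (G : SimpleGraph α) (e : α → Z → Prop)
    (P : Finpartition (univ : Finset α)) (c b : ℝ) : Finset (α × α) :=
  edgesWithApex G e fun u z => relDegree c e (P.part u) z < b

lemma mul_card_filter_relDegree_part_lt_le (P : Finpartition (univ : Finset α)) (hb : 0 ≤ b)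
    (hc : 0 ≤ c) (z : Z) :
    c * #{u | e u z ∧ relDegree c e (P.part u) z < b} ≤ b * Fintype.card α := by
  have hcover : ({u | e u z ∧ relDegree c e (P.part u) z < b} : Finset α)
      ⊆ P.parts.biUnion fun U => {u ∈ U | e u z ∧ relDegree c e U z < b} := by
    intro u hu
    simp only [mem_filter_univ] at hu
    exact mem_biUnion.2 ⟨P.part u, P.part_mem.2 (mem_univ u),
      mem_filter.2 ⟨P.mem_part (mem_univ u), hu⟩⟩
  have hpart (U : Finset α) : c * #{u ∈ U | e u z ∧ relDegree c e U z < b} ≤ b * #U := by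
    by_cases hlt : relDegree c e U z < b
    · simp only [hlt, and_true, ← card_mul_relDegree]
      rw [mul_comm]
      gcongr
    · simp only [hlt, and_false, filter_false, card_empty, Nat.cast_zero, mul_zero]
      positivity
  calc c * #{u | e u z ∧ relDegree c e (P.part u) z < b}
      ≤ c * ∑ U ∈ P.parts, (#{u ∈ U | e u z ∧ relDegree c e U z < b} : ℝ) := by
        gcongr
        exact_mod_cast (card_le_card hcover).trans card_biUnion_le
    _ ≤ ∑ U ∈ P.parts, b * #U := by rw [mul_sum]; exact sum_le_sum fun U _ => hpart U
    _ = b * Fintype.card α := by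
        rw [← mul_sum, ← card_univ, ← P.sum_card_parts, Nat.cast_sum]

variable [Fintype Z]

lemma HasUniqueTriangles.mul_card_lightEdges_le (hT : HasUniqueTriangles G e)
    (P : Finpartition (univ : Finset α)) (hb : 0 ≤ b) (hc : 0 ≤ c) :
    c * #(lightEdges G e P c b) ≤ b * Fintype.card α * Fintype.card Z := by
  calc c * #(lightEdges G e P c b)
      ≤ c * ∑ z, (#{u | e u z ∧ relDegree c e (P.part u) z < b} : ℝ) := by
        gcongr
        exact_mod_cast hT.card_edgesWithApex_le fun u z => relDegree c e (P.part u) z < b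
    _ ≤ ∑ _z : Z, b * Fintype.card α := by
        rw [mul_sum]
        exact sum_le_sum fun z _ => mul_card_filter_relDegree_part_lt_le P hb hc z
    _ = _ := by rw [sum_const, card_univ, nsmul_eq_mul, mul_comm]

/-- The edges of `G` whose apex has relative degree at least `b` into both `U` and `V`. -/
noncomputable def heavyEdges (G : SimpleGraph α) (e : α → Z → Prop) (c b : ℝ) (U V : Finset α) :
    Finset (α × α) :=
  edgesWithApex G e fun _ z => b ≤ relDegree c e U z ∧ b ≤ relDegree c e V z

lemma IsTypicalKernel.sum_expect_le {τ : ℝ} (hν : IsTypicalKernel 1 ν τ) (Z' : Finset Z) :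
    ∑ z ∈ Z', 𝔼 u, ν u z ≤ #Z' + τ * Fintype.card Z := by
  have hdeg : ∑ z, |𝔼 u, ν u z - 1| ≤ τ * Fintype.card Z := by
    rw [← Fintype.card_mul_expect, mul_comm τ]
    gcongr
    simpa only [pow_one] using hν.degree
  calc ∑ z ∈ Z', 𝔼 u, ν u z = ∑ z ∈ Z', (𝔼 u, ν u z - 1) + #Z' := by simp
    _ ≤ ∑ z ∈ Z', |𝔼 u, ν u z - 1| + #Z' := by gcongr; exact le_abs_self _
    _ ≤ ∑ z, |𝔼 u, ν u z - 1| + #Z' := by gcongr; exact subset_univ Z'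
    _ ≤ _ := by linarith

lemma HasUniqueTriangles.mul_card_heavyEdges_le {τ : ℝ} (hT : HasUniqueTriangles G e)
    (hν : IsTypicalKernel 1 ν τ) (heν : ∀ u z, e u z → c ≤ ν u z) (hc : 0 ≤ c) (U V : Finset α) :
    c * #(heavyEdges G e c b U V) ≤ Fintype.card α *
      (#{z | b ≤ relDegree c e U z ∧ b ≤ relDegree c e V z} + τ * Fintype.card Z) := by
  set Z' : Finset Z := {z | b ≤ relDegree c e U z ∧ b ≤ relDegree c e V z}
  have hdeg z : c * (#{u | e u z} : ℝ) ≤ Fintype.card α * 𝔼 u, ν u z := by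
    rw [Fintype.card_mul_expect, mul_comm, ← nsmul_eq_mul, ← sum_const, sum_filter]
    refine sum_le_sum fun u _ => ?_
    split_ifs with h
    exacts [heν u z h, hν.nonneg u z]
  have hcard : #(heavyEdges G e c b U V) ≤ ∑ z ∈ Z', #{u | e u z} := by
    refine (hT.card_edgesWithApex_le _).trans ?_
    rw [sum_filter]
    exact sum_le_sum fun z _ => by split_ifs with h <;> simp [h]
  calc c * #(heavyEdges G e c b U V) ≤ ∑ z ∈ Z', c * (#{u | e u z} : ℝ) := by
        rw [← mul_sum]
        gcongr
        exact_mod_cast hcard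
    _ ≤ ∑ z ∈ Z', Fintype.card α * 𝔼 u, ν u z := sum_le_sum fun z _ => hdeg z
    _ ≤ _ := by rw [← mul_sum]; gcongr; exact hν.sum_expect_le Z'

/-- Otherwise a positive proportion of `Z` would have large degree into both `U` and `V`. -/
lemma HasUniqueTriangles.card_heavyEdges_le [Nonempty α] [Nonempty Z]
    (hT : HasUniqueTriangles G e) {τ ε κ ρ d₀ : ℝ} (hν : IsTypicalKernel 4 ν τ) (hc : 0 ≤ c)
    (heν : ∀ u z, e u z → c ≤ ν u z) (hε : 0 ≤ ε) (hε₁ : ε ≤ 1) (hκ : 0 < κ) (hκ₁ : κ ≤ 1)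
    (hρ : 0 < ρ) (hτ : 3 * τ ≤ ε ^ 2 * κ ^ 4 * ρ ^ 2) (hτρ : τ ≤ ρ) (hd₀ : 0 ≤ d₀) (hb : 0 ≤ b)
    (hεd : 16 * ε ≤ (d₀ * b ^ 2 / 2) ^ 4) {U V : Finset α} (hU : κ * Fintype.card α ≤ #U)
    (hV : κ * Fintype.card α ≤ #V) (hunif : G.IsUniform ε U V) (hd : d₀ ≤ G.edgeDensity U V)
    (hcard : Fintype.card Z ≤ c * Fintype.card α)
    (hlarge : c ^ 2 < d₀ * b ^ 2 / 2 * (ρ * Fintype.card Z)) :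
    #(heavyEdges G e c b U V) ≤ 2 * ρ * Fintype.card α ^ 2 := by
  by_contra! hmany
  have hα : (0 : ℝ) < Fintype.card α := by exact_mod_cast Fintype.card_pos
  set Z' : Finset Z := {z | b ≤ relDegree c e U z ∧ b ≤ relDegree c e V z}
  have hZ' : ρ * Fintype.card Z ≤ #Z' := by
    have hν₂ : IsTypicalKernel (2 * 1) ν τ := IsTypicalKernel.of_two_mul (k := 2) hν
    have hcount : Fintype.card α * (2 * ρ * (c * Fintype.card α))
        ≤ Fintype.card α * (#Z' + τ * Fintype.card Z) := by
      calc _ = c * (2 * ρ * Fintype.card α ^ 2) := by ring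
        _ ≤ c * #(heavyEdges G e c b U V) := by gcongr
        _ ≤ _ := hT.mul_card_heavyEdges_le hν₂.of_two_mul heν hc U V
    have hle : 2 * ρ * Fintype.card Z ≤ #Z' + ρ * Fintype.card Z := by
      calc _ ≤ 2 * ρ * (c * Fintype.card α) := by gcongr
        _ ≤ #Z' + τ * Fintype.card Z := le_of_mul_le_mul_left hcount hα
        _ ≤ _ := by gcongr
    linarith
  have hfew := hT.mul_card_le_sq_of_le_relDegree hν hc heν hε hε₁ hκ hκ₁ hρ hτ hd₀ hb hεd hU hV
    hZ' hunif hd (fun z hz => ((mem_filter_univ z).1 hz).1)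
    fun z hz => ((mem_filter_univ z).1 hz).2
  have := mul_le_mul_of_nonneg_left hZ' (by positivity : 0 ≤ d₀ * b ^ 2 / 2)
  linarith

lemma unreduced_edges_subset_union (P : Finpartition (univ : Finset α)) (ε d₀ : ℝ) :
    ({p | G.Adj p.1 p.2 ∧ ¬(G.regularityReduced P ε d₀).Adj p.1 p.2} : Finset (α × α)) ⊆
      (P.nonUniforms G ε).biUnion (fun (U, V) => U ×ˢ V) ∪ P.parts.biUnion offDiag ∪
        (P.sparsePairs G d₀).biUnion fun (U, V) => G.interedges U V := by
  rintro ⟨u, v⟩ huv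
  simp only [mem_filter_univ, SimpleGraph.regularityReduced_adj, not_and, not_exists,
    not_le] at huv
  obtain ⟨hadj, hred⟩ := huv
  obtain ⟨U, hU, hu⟩ := P.exists_mem (mem_univ u)
  obtain ⟨V, hV, hv⟩ := P.exists_mem (mem_univ v)
  simp only [mem_union, mem_biUnion, Prod.exists, P.mk_mem_nonUniforms, P.mk_mem_sparsePairs,
    mem_product, mem_offDiag, SimpleGraph.mem_interedges_iff]
  obtain rfl | hUV := eq_or_ne U V
  · exact .inl <| .inr ⟨U, hU, hu, hv, hadj.ne⟩
  by_cases hunif : G.IsUniform ε U V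
  · exact .inr ⟨U, V, ⟨hU, hV, hUV, hred hadj U hU V hV hu hv hUV hunif⟩, hu, hv, hadj⟩
  · exact .inl <| .inl ⟨U, V, ⟨hU, hV, hUV, hunif⟩, hu, hv⟩

lemma card_unreduced_edges_le [Nonempty α] {P : Finpartition (univ : Finset α)} {ε d₀ γ : ℝ}
    (hε : 0 < ε) (hd₀ : 0 ≤ d₀) (hγ : 0 < γ) (hP : P.IsEquipartition) (hPG : P.IsUniform G ε)
    (hPγ : 4 / γ ≤ #P.parts) :
    (#{p : α × α | G.Adj p.1 p.2 ∧ ¬(G.regularityReduced P ε d₀).Adj p.1 p.2} : ℝ)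
      ≤ (4 * ε + γ / 2 + 4 * d₀) * Fintype.card α ^ 2 := by
  calc _ ≤ ((#((P.nonUniforms G ε).biUnion fun (U, V) => U ×ˢ V) + #(P.parts.biUnion offDiag)
        + #((P.sparsePairs G d₀).biUnion fun (U, V) => G.interedges U V) : ℕ) : ℝ) := by
        gcongr
        exact (card_le_card (unreduced_edges_subset_union P ε d₀)).trans <|
          (card_union_le _ _).trans <| by gcongr; exact card_union_le _ _
    _ ≤ 4 * ε * Fintype.card α ^ 2 + γ / 2 * Fintype.card α ^ 2 + 4 * d₀ * Fintype.card α ^ 2 := by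
        rw [← card_univ]
        push_cast
        gcongr
        · exact (hP.sum_nonUniforms_lt univ_nonempty hε hPG).le
        · exact hP.card_biUnion_offDiag_le hγ hPγ
        · exact hP.card_interedges_sparsePairs_le hd₀
    _ = _ := by ring

end Removal

section SparseRemoval

open scoped Classical

variable {α Z : Type*} [Fintype α] {G : SimpleGraph α} {e : α → Z → Prop} {ν : α → Z → ℝ}
  {P : Finpartition (univ : Finset α)} {c b ε d₀ δ : ℝ} {M : ℕ}

lemma card_le_two_mul_mul_card_part (hP : P.IsEquipartition) (hM : #P.parts ≤ M) {U : Finset α}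
    (hU : U ∈ P.parts) : Fintype.card α ≤ 2 * M * #U := by
  have hparts : 0 < #P.parts := card_pos.2 ⟨U, hU⟩
  have haverage : Fintype.card α / M ≤ #U := by
    calc Fintype.card α / M ≤ #(univ : Finset α) / #P.parts := Nat.div_le_div_left hM hparts
      _ ≤ #U := hP.average_le_card_part hU
  have hpos : 0 < #U := card_pos.2 (P.nonempty_of_mem_parts hU)
  calc Fintype.card α ≤ M * (Fintype.card α / M + 1) :=
        (Nat.lt_mul_div_succ _ (hparts.trans_le hM)).le
    _ ≤ M * (2 * #U) := by gcongr; omega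
    _ = 2 * M * #U := by ring

namespace HasUniqueTriangles

lemma edges_subset_union (hT : HasUniqueTriangles G e) (P : Finpartition (univ : Finset α))
    (c b ε d₀ : ℝ) :
    ({p | G.Adj p.1 p.2} : Finset (α × α)) ⊆
      ({p | G.Adj p.1 p.2 ∧ ¬(G.regularityReduced P ε d₀).Adj p.1 p.2} : Finset (α × α)) ∪
        lightEdges G e P c b ∪ (lightEdges G e P c b).image Prod.swap ∪
        {W ∈ P.parts ×ˢ P.parts | G.IsUniform ε W.1 W.2 ∧ d₀ ≤ G.edgeDensity W.1 W.2}.biUnion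
          fun W => heavyEdges G e c b W.1 W.2 := by
  rintro ⟨u, v⟩ huv
  have hadj : G.Adj u v := by simpa only [mem_filter_univ] using huv
  obtain ⟨z, ⟨hu_z, hv_z⟩, -⟩ := hT.existsUnique_apex hadj
  by_cases hred : (G.regularityReduced P ε d₀).Adj u v
  swap
  · exact mem_union_left _ <| mem_union_left _ <| mem_union_left _ <|
      (mem_filter_univ _).2 ⟨hadj, hred⟩
  obtain ⟨-, U, hU, V, hV, hu, hv, -, hunif, hd⟩ := hred
  obtain hbU | hbU := lt_or_ge (relDegree c e U z) b
  · exact mem_union_left _ <| mem_union_left _ <| mem_union_right _ <|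
      mem_edgesWithApex.2 ⟨hadj, z, hu_z, hv_z, by simpa only [P.part_eq_of_mem hU hu] using hbU⟩
  obtain hbV | hbV := lt_or_ge (relDegree c e V z) b
  · exact mem_union_left _ <| mem_union_right _ <| mem_image.2 ⟨(v, u), mem_edgesWithApex.2
      ⟨hadj.symm, z, hv_z, hu_z, by simpa only [P.part_eq_of_mem hV hv] using hbV⟩, rfl⟩
  · exact mem_union_right _ <| mem_biUnion.2 ⟨(U, V),
      mem_filter.2 ⟨mem_product.2 ⟨hU, hV⟩, hunif, hd⟩,
      mem_edgesWithApex.2 ⟨hadj, z, hu_z, hv_z, hbU, hbV⟩⟩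

lemma card_edges_le_add (hT : HasUniqueTriangles G e) (hM : #P.parts ≤ M) {K : ℝ} (hK : 0 ≤ K)
    (hheavy : ∀ U ∈ P.parts, ∀ V ∈ P.parts, G.IsUniform ε U V → d₀ ≤ G.edgeDensity U V →
      #(heavyEdges G e c b U V) ≤ K) :
    (#{p : α × α | G.Adj p.1 p.2} : ℝ)
      ≤ #{p : α × α | G.Adj p.1 p.2 ∧ ¬(G.regularityReduced P ε d₀).Adj p.1 p.2}
        + 2 * #(lightEdges G e P c b) + M ^ 2 * K := by
  let pairs : Finset (Finset α × Finset α) :=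
    {W ∈ P.parts ×ˢ P.parts | G.IsUniform ε W.1 W.2 ∧ d₀ ≤ G.edgeDensity W.1 W.2}
  have hpairs : (#(pairs.biUnion fun W => heavyEdges G e c b W.1 W.2) : ℝ) ≤ M ^ 2 * K := by
    calc _ ≤ ∑ W ∈ pairs, (#(heavyEdges G e c b W.1 W.2) : ℝ) := by exact_mod_cast card_biUnion_le
      _ ≤ ∑ _W ∈ pairs, K := by
          refine sum_le_sum fun W hW => ?_
          obtain ⟨hparts, hunif, hd⟩ := mem_filter.1 hW
          exact hheavy _ (mem_product.1 hparts).1 _ (mem_product.1 hparts).2 hunif hd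
      _ = #pairs * K := by rw [sum_const, nsmul_eq_mul]
      _ ≤ M ^ 2 * K := by
          gcongr
          have hcard : #pairs ≤ M ^ 2 := by
            calc #pairs ≤ #(P.parts ×ˢ P.parts) := card_filter_le _ _
              _ = #P.parts ^ 2 := by rw [card_product, sq]
              _ ≤ M ^ 2 := by gcongr
          exact_mod_cast hcard
  have hcard := (card_le_card (hT.edges_subset_union P c b ε d₀)).trans <|
    (card_union_le _ _).trans <| add_le_add_left ((card_union_le _ _).trans <|
      add_le_add (card_union_le _ _) card_image_le) _
  have hcast := (Nat.cast_le (α := ℝ)).2 hcard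
  push_cast at hcast
  linarith

lemma card_edges_le_mul_sq [Nonempty α] [Fintype Z] [Nonempty Z] {τ : ℝ}
    (hT : HasUniqueTriangles G e) (hν : IsTypicalKernel 4 ν τ) (hc : 0 < c)
    (heν : ∀ u z, e u z → c ≤ ν u z) (hδ : 0 < δ) (hε : 0 < ε) (hε₁ : ε ≤ 1) (hεδ : ε ≤ δ / 32)
    (hεd : 16 * ε ≤ (δ / 32 * (δ / 8) ^ 2 / 2) ^ 4) (hM : 0 < M)
    (hτ : 3 * τ ≤ ε ^ 2 * (1 / (2 * M)) ^ 4 * (δ / (8 * M ^ 2)) ^ 2) (hτδ : τ ≤ δ / (8 * M ^ 2))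
    (hP : P.IsEquipartition) (hPG : P.IsUniform G ε) (hPδ : 4 / (δ / 4) ≤ #P.parts)
    (hPM : #P.parts ≤ M) (hcard : Fintype.card Z ≤ c * Fintype.card α)
    (hlarge : c ^ 2 < δ / 32 * (δ / 8) ^ 2 / 2 * (δ / (8 * M ^ 2) * Fintype.card Z)) :
    (#{p : α × α | G.Adj p.1 p.2} : ℝ) ≤ δ * Fintype.card α ^ 2 := by
  set m : ℝ := (Fintype.card α : ℝ)
  have hM₀ : (0 : ℝ) < M := by exact_mod_cast hM
  have hpart U (hU : U ∈ P.parts) : 1 / (2 * M) * m ≤ #U := by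
    rw [div_mul_eq_mul_div, one_mul, div_le_iff₀' (by positivity)]
    have : (Fintype.card α : ℝ) ≤ 2 * M * #U := by
      exact_mod_cast card_le_two_mul_mul_card_part hP hPM hU
    exact this
  have hκ₁ : 1 / (2 * M : ℝ) ≤ 1 := by
    have : (1 : ℝ) ≤ M := by exact_mod_cast hM
    rw [div_le_one (by positivity)]
    linarith
  have hlight : (#(lightEdges G e P c (δ / 8)) : ℝ) ≤ δ / 8 * m ^ 2 := by
    refine le_of_mul_le_mul_left ?_ hc
    calc _ ≤ δ / 8 * m * Fintype.card Z := hT.mul_card_lightEdges_le P (by positivity) hc.le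
      _ ≤ δ / 8 * m * (c * m) := by gcongr
      _ = _ := by ring
  have hheavy := hT.card_edges_le_add hPM (by positivity : 0 ≤ 2 * (δ / (8 * M ^ 2)) * m ^ 2)
    fun U hU V hV hunif hd => hT.card_heavyEdges_le hν hc.le heν hε.le hε₁ (by positivity) hκ₁
      (by positivity) hτ hτδ (by positivity) (by positivity) hεd (hpart U hU) (hpart V hV) hunif hd
      hcard hlarge
  have hunreduced := card_unreduced_edges_le hε (by positivity : 0 ≤ δ / 32)
    (by positivity : 0 < δ / 4) hP hPG hPδ
  calc _ ≤ _ := hheavy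
    _ ≤ (4 * (δ / 32) + δ / 4 / 2 + 4 * (δ / 32)) * m ^ 2 + 2 * (δ / 8 * m ^ 2)
        + M ^ 2 * (2 * (δ / (8 * M ^ 2)) * m ^ 2) := by
      gcongr
      exact hunreduced.trans (by gcongr)
    _ = 7 / 8 * (δ * m ^ 2) := by field_simp; ring
    _ ≤ δ * m ^ 2 := by linarith [(by positivity : 0 ≤ δ * m ^ 2)]

end HasUniqueTriangles

/-- A removal lemma in which `e` is dense only relative to the kernel `ν`. -/
theorem sparse_removal.{u, v} (hδ : 0 < δ) : ∃ τ : ℝ, 0 < τ ∧ ∃ C : ℝ,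
    ∀ {α : Type u} {Z : Type v} [Fintype α] [Fintype Z] {G : SimpleGraph α} {e : α → Z → Prop}
      {ν : α → Z → ℝ} {c : ℝ}, HasUniqueTriangles G e → IsTypicalKernel 4 ν τ → 1 ≤ c →
      (∀ u z, e u z → c ≤ ν u z) → Fintype.card Z ≤ c * Fintype.card α →
      C * c ^ 2 ≤ Fintype.card Z →
      (#{p : α × α | G.Adj p.1 p.2} : ℝ) ≤ δ * Fintype.card α ^ 2 := by
  obtain ⟨ε, hε, hεmin⟩ := exists_between
    (by positivity : 0 < min (min 1 (δ / 32)) ((δ / 32 * (δ / 8) ^ 2 / 2) ^ 4 / 16))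
  simp only [lt_min_iff] at hεmin
  obtain ⟨⟨hε₁, hεδ⟩, hεd⟩ := hεmin
  let l := ⌈4 / (δ / 4)⌉₊
  let M := SzemerediRegularity.bound ε l
  have hM : 0 < M := SzemerediRegularity.bound_pos _ _
  let ρ := δ / (8 * M ^ 2)
  let x := δ / 32 * (δ / 8) ^ 2 / 2 * ρ
  have hx : 0 < x := by positivity
  refine ⟨min ρ (ε ^ 2 * (1 / (2 * M)) ^ 4 * ρ ^ 2 / 3), by positivity, l + 2 / x, ?_⟩
  intro α Z _ _ G e ν c hT hν hc heν hcard hC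
  have hc₀ : 0 < c := zero_lt_one.trans_le hc
  have hZ : (0 : ℝ) < Fintype.card Z := hC.trans_lt' (by positivity)
  have hl : (l + 2 / x : ℝ) ≤ Fintype.card α := by
    refine le_of_mul_le_mul_left ?_ hc₀
    calc c * (l + 2 / x) ≤ c * ((l + 2 / x) * c) := by
          gcongr; exact le_mul_of_one_le_right (by positivity) hc
      _ = (l + 2 / x) * c ^ 2 := by ring
      _ ≤ c * Fintype.card α := hC.trans hcard
  have hlα : (l : ℝ) ≤ Fintype.card α := hl.trans' (le_add_of_nonneg_right (by positivity))
  have : Nonempty Z := Fintype.card_pos_iff.1 (by exact_mod_cast hZ)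
  have : Nonempty α := Fintype.card_pos_iff.1 (by
    exact_mod_cast (hl.trans_lt' (by positivity) : (0 : ℝ) < Fintype.card α))
  obtain ⟨P, hP, hlP, hPM, hPG⟩ := szemeredi_regularity G hε (by exact_mod_cast hlα)
  refine hT.card_edges_le_mul_sq hν hc₀ heν hδ hε hε₁.le hεδ.le (by linarith) hM ?_
    (min_le_left _ _) hP hPG ((Nat.le_ceil _).trans (by exact_mod_cast hlP)) hPM hcard ?_
  · linarith [min_le_right ρ (ε ^ 2 * (1 / (2 * M)) ^ 4 * ρ ^ 2 / 3)]
  · calc c ^ 2 < 2 * c ^ 2 := by linarith [pow_pos hc₀ 2]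
      _ = x * (2 / x * c ^ 2) := by field_simp
      _ ≤ x * ((l + 2 / x) * c ^ 2) := by gcongr; exact le_add_of_nonneg_left l.cast_nonneg
      _ ≤ x * Fintype.card Z := by gcongr
      _ = _ := by ring

end SparseRemoval

/-! ### Corners in products of pseudorandom sets -/

section NormInd

variable {X : Type*} [Fintype X] [DecidableEq X] {S : Finset X}

/-- The indicator function of `S` normalised to have average `1`. -/
noncomputable def normInd (S : Finset X) (x : X) : ℝ :=
  Fintype.card X / #S * if x ∈ S then 1 else 0

lemma normInd_nonneg (S : Finset X) (x : X) : 0 ≤ normInd S x := by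
  unfold normInd; positivity

lemma normInd_of_mem {x : X} (hx : x ∈ S) : normInd S x = Fintype.card X / #S := by
  rw [normInd, if_pos hx, mul_one]

lemma expect_normInd_mul (S : Finset X) (f : X → ℝ) : 𝔼 x, normInd S x * f x = 𝔼 x ∈ S, f x := by
  obtain rfl | hS := S.eq_empty_or_nonempty
  · simp [normInd]
  have hX : (Fintype.card X : ℝ) ≠ 0 := by
    exact_mod_cast (hS.card_pos.trans_le (card_le_univ S)).ne'
  simp only [normInd, mul_assoc, ite_mul, one_mul, zero_mul, ← mul_expect]
  rw [Fintype.expect_eq_sum_div_card, expect_eq_sum_div_card, sum_ite_mem, univ_inter]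
  field_simp

lemma expect_normInd_sq (hS : S.Nonempty) : 𝔼 x, normInd S x ^ 2 = Fintype.card X / #S := by
  simp only [sq, expect_normInd_mul]
  rw [expect_congr rfl fun x hx => normInd_of_mem hx, expect_const hS]

end NormInd

section PseudorandomSets

variable {X : Type*} [AddCommGroup X] [Fintype X]

/-- A function `ν` is pseudorandom for corners up to `η` if the averages `𝔼 x, ν x * ν (z - x)` and
`𝔼 x, ν x * (ν (z - x) * ν (z' - x))` have second and fourth moments within `η` of `1`. These are
four instances of the linear forms condition, with the moments taken over `z` and `z'`. -/
structure IsCornerPseudorandom (ν : X → ℝ) (η : ℝ) : Prop where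
  degree_sq : |𝔼 z, (𝔼 x, ν x * ν (z - x)) ^ 2 - 1| ≤ η
  degree_pow_four : |𝔼 z, (𝔼 x, ν x * ν (z - x)) ^ 4 - 1| ≤ η
  codegree_sq : |𝔼 z, 𝔼 z', (𝔼 x, ν x * (ν (z - x) * ν (z' - x))) ^ 2 - 1| ≤ η
  codegree_pow_four : |𝔼 z, 𝔼 z', (𝔼 x, ν x * (ν (z - x) * ν (z' - x))) ^ 4 - 1| ≤ η

lemma expect_sq_le_card_mul_sq_expect {ι : Type*} [Fintype ι] {f : ι → ℝ} (hf : ∀ i, 0 ≤ f i) :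
    𝔼 i, f i ^ 2 ≤ Fintype.card ι * (𝔼 i, f i) ^ 2 := by
  obtain hι | hι := isEmpty_or_nonempty ι
  · simp
  have : (0 : ℝ) < Fintype.card ι := by exact_mod_cast Fintype.card_pos
  calc 𝔼 i, f i ^ 2 ≤ (∑ i, f i) ^ 2 / Fintype.card ι := by
        rw [Fintype.expect_eq_sum_div_card]
        gcongr
        exact sum_sq_le_sq_sum_of_nonneg fun i _ => hf i
    _ = _ := by rw [Fintype.expect_eq_sum_div_card]; field_simp

/-- The left-hand side is the diagonal `x = x'` of the second moment on the right. -/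
lemma expect_sq_pow_three_le {f : X → ℝ} (hf : ∀ x, 0 ≤ f x) :
    (𝔼 x, f x ^ 2) ^ 3
      ≤ Fintype.card X * 𝔼 z, 𝔼 z', (𝔼 x, f x * (f (z - x) * f (z' - x))) ^ 2 := by
  have hshift x : 𝔼 z, f (z - x) ^ 2 = 𝔼 z, f z ^ 2 :=
    Fintype.expect_equiv (Equiv.subRight x) _ _ fun _ => rfl
  calc (𝔼 x, f x ^ 2) ^ 3
      = 𝔼 x, f x ^ 2 * ((𝔼 z, f (z - x) ^ 2) * 𝔼 z', f (z' - x) ^ 2) := by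
        simp only [hshift, ← expect_mul]; ring
    _ = 𝔼 z, 𝔼 z', 𝔼 x, (f x * (f (z - x) * f (z' - x))) ^ 2 := by
        simp only [expect_mul_expect]
        simp only [mul_expect, mul_pow]
        rw [expect_comm]
        exact expect_congr rfl fun z _ => expect_comm ..
    _ ≤ 𝔼 z, 𝔼 z', Fintype.card X * (𝔼 x, f x * (f (z - x) * f (z' - x))) ^ 2 := by
        gcongr with z _ z' _
        exact expect_sq_le_card_mul_sq_expect fun x =>
          mul_nonneg (hf _) (mul_nonneg (hf _) (hf _))
    _ = _ := by simp only [← mul_expect]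

lemma IsCornerPseudorandom.sq_card_le [DecidableEq X] {S : Finset X} {η : ℝ}
    (h : IsCornerPseudorandom (normInd S) η) (hη : η ≤ 1) (hS : S.Nonempty) :
    (Fintype.card X : ℝ) ^ 2 ≤ 2 * #S ^ 3 := by
  have : (0 : ℝ) < #S := by exact_mod_cast hS.card_pos
  have hX : (0 : ℝ) < Fintype.card X := by exact_mod_cast Fintype.card_pos
  have hcube := expect_sq_pow_three_le (normInd_nonneg S)
  rw [expect_normInd_sq hS] at hcube
  have hmoment := (abs_le.1 h.codegree_sq).2
  have hle : (Fintype.card X / #S : ℝ) ^ 3 ≤ Fintype.card X * 2 :=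
    hcube.trans (by gcongr; linarith)
  rw [div_pow, div_le_iff₀ (by positivity)] at hle
  exact le_of_mul_le_mul_left (by linarith) hX

end PseudorandomSets

section Corners

variable {X : Type*} {S : Finset X} {A : Finset (X × X)}

/-- The element of the group underlying a vertex of `S ⊕ S`. A vertex stands for a line in `X × X`:
`Sum.inl x` for the column over `x` and `Sum.inr y` for the row at height `y`. -/
def coord : S ⊕ S → X := Sum.elim Subtype.val Subtype.val

/-- The bipartite graph on the columns and rows in `S ⊕ S` in which a column and a row are adjacent
if they cross in a point of `A`. -/
def pointGraph (S : Finset X) (A : Finset (X × X)) : SimpleGraph (S ⊕ S) where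
  Adj
    | .inl x, .inr y => (x.1, y.1) ∈ A
    | .inr y, .inl x => (x.1, y.1) ∈ A
    | _, _ => False
  symm := ⟨by rintro (x | x) (y | y) h <;> exact h⟩
  loopless := ⟨by rintro (x | x) h <;> exact h⟩

lemma eq_of_coord_eq {u v v' : S ⊕ S} (h : (pointGraph S A).Adj u v)
    (h' : (pointGraph S A).Adj u v') (hv : coord v = coord v') : v = v' := by
  obtain x | x := u <;> obtain y | y := v <;> obtain y' | y' := v' <;>
    first
      | exact h.elim
      | exact h'.elim
      | exact congrArg _ (Subtype.ext hv)

open Classical in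
lemma two_mul_card_le_card_adj (hA : A ⊆ S ×ˢ S) :
    2 * #A ≤ #{p : (S ⊕ S) × (S ⊕ S) | (pointGraph S A).Adj p.1 p.2} := by
  have hS (a : A) : a.1.1 ∈ S ∧ a.1.2 ∈ S := mem_product.1 (hA a.2)
  let f : A ⊕ A → (S ⊕ S) × (S ⊕ S) := Sum.elim
    (fun a => (.inl ⟨a.1.1, (hS a).1⟩, .inr ⟨a.1.2, (hS a).2⟩))
    (fun a => (.inr ⟨a.1.2, (hS a).2⟩, .inl ⟨a.1.1, (hS a).1⟩))
  have hcard : #(univ : Finset (A ⊕ A)) = 2 * #A := by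
    rw [card_univ, Fintype.card_sum, Fintype.card_coe, two_mul]
  rw [← hcard]
  refine card_le_card_of_injOn f ?_ ?_
  · rintro (a | a) - <;> simp only [coe_filter, mem_univ, true_and, Set.mem_ofPred_eq] <;> exact a.2
  · rintro (a | a) - (b | b) - h <;>
      simp only [f, Sum.elim_inl, Sum.elim_inr, Prod.mk.injEq, Sum.inl.injEq, Sum.inr.injEq,
        Subtype.mk.injEq, reduceCtorEq, and_self] at h ⊢
    · exact Subtype.ext (Prod.ext h.1 h.2)
    · exact Subtype.ext (Prod.ext h.2 h.1)

lemma expect_coord [Fintype X] [DecidableEq X] (S : Finset X) (f : X → ℝ) :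
    𝔼 u : S ⊕ S, f (coord u) = 𝔼 x, normInd S x * f x := by
  rw [expect_normInd_mul, Fintype.expect_eq_sum_div_card, expect_eq_sum_div_card,
    Fintype.sum_sum_type, Fintype.card_sum, Fintype.card_coe]
  simp only [coord, Sum.elim_inl, Sum.elim_inr, sum_coe_sort S f]
  push_cast
  rw [← two_mul, ← two_mul, mul_div_mul_left _ _ two_ne_zero]

variable [AddCommGroup X]

/-- A column or row meets the antidiagonal `{(x, y) | x + y = z}` in a point of `A`. -/
def MeetsDiag (A : Finset (X × X)) : S ⊕ S → X → Prop
  | .inl x, z => (x.1, z - x.1) ∈ A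
  | .inr y, z => (z - y.1, y.1) ∈ A

lemma MeetsDiag.sub_coord_mem (hA : A ⊆ S ×ˢ S) {u : S ⊕ S} {z : X} (h : MeetsDiag A u z) :
    z - coord u ∈ S := by
  obtain x | y := u
  exacts [(mem_product.1 (hA h)).2, (mem_product.1 (hA h)).1]

lemma meetsDiag_coord_add_coord {u v : S ⊕ S} (h : (pointGraph S A).Adj u v) :
    MeetsDiag A u (coord u + coord v) := by
  obtain x | x := u <;> obtain y | y := v
  · exact h.elim
  · change (x.1, y.1) ∈ A at h
    simpa [MeetsDiag, coord] using h
  · change (y.1, x.1) ∈ A at h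
    simpa [MeetsDiag, coord] using h
  · exact h.elim

lemma eq_coord_add_coord (hA : IsCornerFree (A : Set (X × X))) {u v : S ⊕ S} {z : X}
    (h : (pointGraph S A).Adj u v) (hu : MeetsDiag A u z) (hv : MeetsDiag A v z) :
    z = coord u + coord v := by
  have hcorner {x y : X} (hxy : (x, y) ∈ A) (hx : (x, z - x) ∈ A) (hy : (z - y, y) ∈ A) :
      z = x + y :=
    eq_add_of_sub_eq (hA ⟨hxy, hx, hy, by abel⟩).symm
  obtain x | x := u <;> obtain y | y := v
  exacts [h.elim, hcorner h hu hv, (hcorner h hv hu).trans (add_comm _ _), h.elim]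

lemma hasUniqueTriangles_pointGraph (S : Finset X) (hA : IsCornerFree (A : Set (X × X))) :
    HasUniqueTriangles (pointGraph S A) (MeetsDiag A) where
  existsUnique_apex u v h := by
    refine ⟨coord u + coord v, ⟨meetsDiag_coord_add_coord h, ?_⟩,
      fun z hz => eq_coord_add_coord hA h hz.1 hz.2⟩
    rw [add_comm]
    exact meetsDiag_coord_add_coord h.symm
  eq_of_apex u v v' z h h' hu hv hv' := eq_of_coord_eq h h' <| add_left_cancel <|
    (eq_coord_add_coord hA h hu hv).symm.trans (eq_coord_add_coord hA h' hu hv')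

variable [Fintype X] [DecidableEq X]

lemma IsCornerPseudorandom.isTypicalKernel {η : ℝ} (h : IsCornerPseudorandom (normInd S) η)
    (hη : η ≤ 1) :
    IsTypicalKernel 4 (fun (u : S ⊕ S) z => normInd S (z - coord u)) (5 * √η) where
  nonneg _ _ := normInd_nonneg S _
  degree := by
    have hdegree z : 𝔼 u : S ⊕ S, normInd S (z - coord u) = 𝔼 x, normInd S x * normInd S (z - x) :=
      expect_coord S fun x => normInd S (z - x)
    simp only [hdegree]
    exact expect_abs_pow_four_sub_one_le hη h.degree_sq h.degree_pow_four
  codegree := by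
    have huncurry (f : X → X → ℝ) : 𝔼 z, 𝔼 z', f z z' = 𝔼 p : X × X, f p.1 p.2 := by
      rw [← univ_product_univ, expect_product]
    have hcodegree z z' : 𝔼 u : S ⊕ S, normInd S (z - coord u) * normInd S (z' - coord u)
        = 𝔼 x, normInd S x * (normInd S (z - x) * normInd S (z' - x)) :=
      expect_coord S fun x => normInd S (z - x) * normInd S (z' - x)
    simp only [hcodegree, huncurry]
    exact expect_abs_pow_four_sub_one_le hη (by simpa only [huncurry] using h.codegree_sq)
      (by simpa only [huncurry] using h.codegree_pow_four)

end Corners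

lemma mul_le_sq_of_sq_le_two_mul_pow_three {D n s : ℝ} (hD : 0 ≤ D) (hn : 4 * D ^ 3 < n)
    (h : n ^ 2 ≤ 2 * s ^ 3) : D * n ≤ s ^ 2 := by
  have hn₀ : 0 < n := hn.trans_le' (by positivity)
  refine (pow_le_pow_iff_left₀ (by positivity) (sq_nonneg s) three_ne_zero).1 ?_
  have hsq : (n ^ 2) ^ 2 ≤ (2 * s ^ 3) ^ 2 := by gcongr
  have hcube : 4 * D ^ 3 * n ^ 3 ≤ n * n ^ 3 := by gcongr
  linarith

theorem corner_removal_in_product_general.{u} (δ : ℝ) (hδ : 0 < δ) :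
    ∃ η : ℝ, 0 < η ∧ ∃ N₀ : ℕ, ∀ {X : Type u} [AddCommGroup X] [Fintype X] [DecidableEq X],
      N₀ ≤ Fintype.card X → ∀ {S : Finset X}, S.Nonempty → IsCornerPseudorandom (normInd S) η →
      ∀ {A : Finset (X × X)}, A ⊆ S ×ˢ S → IsCornerFree (A : Set (X × X)) →
      (#A : ℝ) ≤ δ * #S ^ 2 := by
  classical
  obtain ⟨τ, hτ, C, hremoval⟩ := sparse_removal (half_pos hδ)
  let η := min 1 ((τ / 5) ^ 2)
  have hητ : 5 * √η ≤ τ := by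
    have : √η ≤ τ / 5 := Real.sqrt_le_iff.2 ⟨by positivity, min_le_right _ _⟩
    linarith
  refine ⟨η, by positivity, ⌈4 * max C 0 ^ 3⌉₊ + 1, ?_⟩
  intro X _ _ _ hX S hS hν A hAS hA
  have hη : η ≤ 1 := min_le_left _ _
  have hS₀ : (0 : ℝ) < #S := by exact_mod_cast hS.card_pos
  have hlarge : max C 0 * Fintype.card X ≤ (#S : ℝ) ^ 2 := mul_le_sq_of_sq_le_two_mul_pow_three
    (le_max_right _ _) (Nat.lt_of_ceil_lt hX) (hν.sq_card_le hη hS)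
  have hvertices : (Fintype.card (S ⊕ S) : ℝ) = 2 * #S := by
    rw [Fintype.card_sum, Fintype.card_coe, ← two_mul, Nat.cast_mul, Nat.cast_two]
  have hcard : (2 * #A : ℝ) ≤ #{p : (S ⊕ S) × (S ⊕ S) | (pointGraph S A).Adj p.1 p.2} := by
    exact_mod_cast two_mul_card_le_card_adj hAS
  have hedges := hcard.trans <| hremoval (hasUniqueTriangles_pointGraph S hA)
    ((hν.isTypicalKernel hη).mono hητ) (c := Fintype.card X / #S) ?_
    (fun u z h => (normInd_of_mem (h.sub_coord_mem hAS)).ge) ?_ ?_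
  · rw [hvertices] at hedges
    linarith
  · rw [one_le_div hS₀]
    exact_mod_cast card_le_univ S
  · rw [hvertices, mul_left_comm, div_mul_cancel₀ _ hS₀.ne']
    linarith [(Nat.cast_nonneg _ : (0 : ℝ) ≤ Fintype.card X)]
  · rw [div_pow, mul_div_assoc', div_le_iff₀ (by positivity), sq, ← mul_assoc, mul_comm _ (_ ^ 2)]
    gcongr
    exact hlarge.trans' (by gcongr; exact le_max_left _ _)

lemma isCornerFree_iff_not_exists {X : Type*} [AddCommGroup X] {A : Set (X × X)} :
    IsCornerFree A ↔
      ¬ ∃ x y d, d ≠ 0 ∧ (x, y) ∈ A ∧ (x + d, y) ∈ A ∧ (x, y + d) ∈ A := by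
  constructor
  · rintro hA ⟨x, y, d, hd, h, hx, hy⟩
    exact hd (left_eq_add.1 (hA ⟨h, hy, hx, by abel⟩))
  · rintro hA x y x' y' ⟨h, hy', hx', heq⟩
    by_contra hne
    refine hA ⟨x, y, x' - x, sub_ne_zero.2 (Ne.symm hne), h, by rwa [add_sub_cancel], ?_⟩
    rwa [← add_sub_assoc, add_comm y, ← heq, add_sub_cancel_left]

section LinearForms

lemma avg_fin_six {X : Type*} [Fintype X] (a b : X → X → X → ℝ) :
    avg (fun v : Fin 6 → X => a (v 4) (v 5) (v 0) * a (v 4) (v 5) (v 1) *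
        (b (v 4) (v 5) (v 2) * b (v 4) (v 5) (v 3)))
      = 𝔼 z, 𝔼 z', (𝔼 x, a z z' x) ^ 2 * (𝔼 y, b z z' y) ^ 2 := by
  let split : (Fin 6 → X) ≃ (X × X) × (X × X) × (X × X) :=
    { toFun := fun v => ((v 4, v 5), (v 0, v 1), (v 2, v 3))
      invFun := fun p => ![p.2.1.1, p.2.1.2, p.2.2.1, p.2.2.2, p.1.1, p.1.2]
      left_inv := fun v => by funext i; fin_cases i <;> rfl
      right_inv := fun _ => rfl }
  rw [avg, ← Fintype.expect_eq_sum_div_card]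
  refine (Fintype.expect_equiv split _ (fun p => a p.1.1 p.1.2 p.2.1.1 * a p.1.1 p.1.2 p.2.1.2 *
    (b p.1.1 p.1.2 p.2.2.1 * b p.1.1 p.1.2 p.2.2.2)) fun _ => rfl).trans ?_
  simp only [← univ_product_univ, expect_product, sq, expect_mul_expect]
  exact expect_congr rfl fun z _ => expect_congr rfl fun z' _ => expect_congr rfl fun x _ =>
    expect_comm ..

lemma isCornerPseudorandom_of_abs_avg_sub_one_le {N : ℕ} [NeZero N] {ν : ZMod N → ℝ} {η : ℝ}
    (h : ∀ b : Fin 12 → Bool, (∃ i, b i = true) → |avg (fun v : Fin 6 → ZMod N => ∏ i : Fin 12,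
      if b i then productCornerFactors ν (v 0) (v 1) (v 2) (v 3) (v 4) (v 5) i else 1) - 1| ≤ η) :
    IsCornerPseudorandom ν η := by
  let p (z _ x : ZMod N) : ℝ := ν x * ν (z - x)
  let q (z z' x : ZMod N) : ℝ := ν x * (ν (z - x) * ν (z' - x))
  have hform (b : Fin 12 → Bool) (hb : ∃ i, b i = true) {f : (Fin 6 → ZMod N) → ℝ}
      (hf : ∀ v, ∏ i, (if b i then productCornerFactors ν (v 0) (v 1) (v 2) (v 3) (v 4) (v 5) i
        else 1) = f v) : |avg f - 1| ≤ η := by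
    simpa only [hf] using h b hb
  have hp₂ := avg_fin_six p fun _ _ _ => 1
  have hp₄ := avg_fin_six p p
  have hq₂ := avg_fin_six q fun _ _ _ => 1
  have hq₄ := avg_fin_six q q
  simp only [p, q, Fintype.expect_const, one_pow, mul_one, ← pow_add] at hp₂ hp₄ hq₂ hq₄
  refine ⟨hp₂ ▸ hform ![true, true, true, true, false, false,
      false, false, false, false, false, false] ⟨0, rfl⟩ fun v => ?_,
    hp₄ ▸ hform ![true, true, true, true, false, false,
      true, true, true, true, false, false] ⟨0, rfl⟩ fun v => ?_,
    hq₂ ▸ hform ![true, true, true, true, true, true,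
      false, false, false, false, false, false] ⟨0, rfl⟩ fun v => ?_,
    hq₄ ▸ hform ![true, true, true, true, true, true,
      true, true, true, true, true, true] ⟨0, rfl⟩ fun v => ?_⟩
  all_goals
    simp only [productCornerFactors, Fin.prod_univ_succ, Fin.prod_univ_zero, Matrix.cons_val_zero,
      Matrix.cons_val_succ, Bool.false_eq_true, ↓reduceIte]
    ring

end LinearForms

/-- **Corner-free subsets of products of pseudorandom sets.** For every `δ > 0` there
exist `η > 0` and `N₀` such that for all `N ≥ N₀`: if `S ⊆ Z_N` is nonempty,
`ν := (N/|S|)·1_S`, and for every nonempty subset `F` of the twelve factors one has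
`|E[∏_{factors in F} ν(·)] - 1| ≤ η`, then every corner-free `A ⊆ S × S` has
`|A| ≤ δ|S|²`. -/
theorem corner_removal_in_product (δ : ℝ) (hδ : 0 < δ) :
    ∃ η : ℝ, 0 < η ∧ ∃ N₀ : ℕ, ∀ N : ℕ, N₀ ≤ N → ∀ [NeZero N],
      ∀ S : Finset (ZMod N), S.Nonempty →
      (∀ b : Fin 12 → Bool, (∃ i, b i = true) →
        |avg (fun v : Fin 6 → ZMod N =>
          ∏ i : Fin 12,
            if b i then
              productCornerFactors
                (fun u => (N : ℝ) / (S.card : ℝ) * if u ∈ S then 1 else 0)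
                (v 0) (v 1) (v 2) (v 3) (v 4) (v 5) i
            else 1) - 1| ≤ η) →
      ∀ A : Finset (ZMod N × ZMod N), A ⊆ S ×ˢ S →
      (¬ ∃ x y d : ZMod N, d ≠ 0 ∧
        (x, y) ∈ A ∧ (x + d, y) ∈ A ∧ (x, y + d) ∈ A) →
      (A.card : ℝ) ≤ δ * (S.card : ℝ) ^ 2 := by
  obtain ⟨η, hη, N₀, hgeneral⟩ := corner_removal_in_product_general δ hδ
  refine ⟨η, hη, N₀, fun N hN _ S hS hlin A hAS hA => hgeneral (by rwa [ZMod.card]) hS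
    (isCornerPseudorandom_of_abs_avg_sub_one_le ?_) hAS (isCornerFree_iff_not_exists.2 hA)⟩
  unfold normInd
  simpa only [ZMod.card] using hlin
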